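/- Let p be an odd prime, n ≥ 1, q = p^(2^n), and G = PGL₂(F_q). Fix an involution x ∈ G not lying in the image of SL₂(F_q) in G, and let C = C_G(x). Then x is central in C, the set of involutions of C other than x has cardinality q+1, and these q+1 involutions partition into (q+1)/2 pairs {t, xt}, each pair together with x and the identity forming a Klein four-subgroup; distinct pairs give distinct Klein four-subgroups. -/

import Mathlib

open Matrix

/-- `PGL₂(F)`: the projective general linear group, i.e. the quotient of `GL₂(F)`
by its center. -/
abbrev ProjectiveGL2 (F : Type) [Field F] : Type :=
  Matrix.GeneralLinearGroup (Fin 2) F ⧸ Subgroup.center (Matrix.GeneralLinearGroup (Fin 2) F)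

/-- The image of the natural map `SL₂(F) → PGL₂(F)`: the socle of `PGL₂(F)`,
isomorphic to `PSL₂(F)`. -/
def socleSL2 (F : Type) [Field F] : Subgroup (ProjectiveGL2 F) :=
  ((QuotientGroup.mk' (Subgroup.center (Matrix.GeneralLinearGroup (Fin 2) F))).comp
    Matrix.SpecialLinearGroup.toGL).range

/-!
If `2 ≠ 0` in `F`, an element of `PGL₂(F)` is an involution exactly when it is the class of a
trace-zero matrix. By the polarized Cayley–Hamilton identity `gh + hg = tr(gh) • 1`, the classes of
two such matrices `g` and `h` are distinct and commute if and only if `tr(gh) = 0`. If `-1` is a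
square and the class `x` of `g` lies outside the image of `SL₂(F)`, then `-det g` is not a square.
The determinant is then anisotropic on the plane of trace-zero matrices orthogonal to `g`, so the
involutions other than `x` commuting with `x` form a projective line, with `|F| + 1` points.
Multiplication by `x` acts on this line without fixed points, and its orbits `{t, xt}` give the
Klein four-subgroups.
-/

section CommutingInvolutions

variable {G : Type*} [Group G] {x t : G}

/-- The involutions of the centralizer of `x` other than `x` itself. -/
def commutingInvolutions (x : G) : Set G :=
  {t | t ∈ Subgroup.centralizer ({x} : Set G) ∧ orderOf t = 2 ∧ t ≠ x}

lemma mem_commutingInvolutions_iff :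
    t ∈ commutingInvolutions x ↔ Commute x t ∧ orderOf t = 2 ∧ t ≠ x :=
  and_congr_left' (Subgroup.mem_centralizer_singleton_iff.trans eq_comm)

lemma orderOf_eq_two_iff_mul_self : orderOf t = 2 ↔ t * t = 1 ∧ t ≠ 1 := by
  rw [orderOf_eq_prime_iff, sq]

lemma coe_closure_pair_of_mul_self_eq_one (hx : x * x = 1) (ht : t * t = 1) (hxt : Commute x t) :
    (Subgroup.closure {x, t} : Set G) = {1, x, t, x * t} := by
  have hxmem : x ∈ Subgroup.closure {x, t} := Subgroup.subset_closure (.inl rfl)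
  have htmem : t ∈ Subgroup.closure {x, t} := Subgroup.subset_closure (.inr rfl)
  have hx_cancel (a : G) : x * (x * a) = a := by rw [← mul_assoc, hx, one_mul]
  refine Set.Subset.antisymm (fun z hz => ?_) ?_
  · induction hz using Subgroup.closure_induction with
    | mem y hy => rcases hy with rfl | rfl <;> simp
    | one => simp
    | mul a b _ _ ha hb =>
      rcases ha with rfl | rfl | rfl | rfl <;> rcases hb with rfl | rfl | rfl | rfl <;>
        simp [hx, ht, mul_assoc, hx_cancel, ← hxt.eq, ← hxt.left_comm]
    | inv a _ ha =>
      have hx_inv : x⁻¹ = x := inv_eq_of_mul_eq_one_left hx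
      have ht_inv : t⁻¹ = t := inv_eq_of_mul_eq_one_left ht
      rcases ha with rfl | rfl | rfl | rfl <;> simp [hx_inv, ht_inv, hxt.eq]
  · rintro z (rfl | rfl | rfl | rfl)
    exacts [one_mem _, hxmem, htmem, mul_mem hxmem htmem]

lemma coe_closure_pair_of_mem_commutingInvolutions (hx : orderOf x = 2)
    (ht : t ∈ commutingInvolutions x) :
    (Subgroup.closure {x, t} : Set G) = {1, x, t, x * t} := by
  obtain ⟨hxt, ht2, -⟩ := mem_commutingInvolutions_iff.1 ht
  exact coe_closure_pair_of_mul_self_eq_one (orderOf_eq_two_iff_mul_self.1 hx).1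
    (orderOf_eq_two_iff_mul_self.1 ht2).1 hxt

lemma mul_mem_commutingInvolutions (hx : orderOf x = 2) (ht : t ∈ commutingInvolutions x) :
    x * t ∈ commutingInvolutions x := by
  obtain ⟨hxt, ht2, htx⟩ := mem_commutingInvolutions_iff.1 ht
  obtain ⟨hxx, -⟩ := orderOf_eq_two_iff_mul_self.1 hx
  obtain ⟨htt, ht1⟩ := orderOf_eq_two_iff_mul_self.1 ht2
  refine mem_commutingInvolutions_iff.2
    ⟨(Commute.refl x).mul_right hxt, orderOf_eq_two_iff_mul_self.2 ⟨?_, fun h => ?_⟩, ?_⟩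
  · rw [hxt.symm.mul_mul_mul_comm, hxx, htt, one_mul]
  · exact htx (mul_left_cancel (h.trans hxx.symm))
  · rwa [ne_eq, mul_eq_left]

lemma mul_ne_self_of_orderOf_eq_two (hx : orderOf x = 2) (t : G) : x * t ≠ t := by
  rw [ne_eq, mul_eq_right]
  exact (orderOf_eq_two_iff_mul_self.1 hx).2

lemma isKleinFour_closure_pair (hx : orderOf x = 2) (ht : t ∈ commutingInvolutions x) :
    IsKleinFour (Subgroup.closure {x, t}) := by
  have hcoe := coe_closure_pair_of_mem_commutingInvolutions hx ht
  obtain ⟨-, hxt2, hxtx⟩ := mul_mem_commutingInvolutions hx ht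
  obtain ⟨-, ht2, htx⟩ := ht
  have hx1 := (orderOf_eq_two_iff_mul_self.1 hx).2
  have ht1 := (orderOf_eq_two_iff_mul_self.1 ht2).2
  have hxt1 := (orderOf_eq_two_iff_mul_self.1 hxt2).2
  have hxtt := mul_ne_self_of_orderOf_eq_two hx t
  have hcard : Nat.card (Subgroup.closure {x, t}) = 4 := by
    classical
    rw [← SetLike.coe_sort_coe, hcoe, Nat.card_coe_set_eq, Set.ncard_eq_toFinset_card']
    simp [hx1.symm, ht1.symm, hxt1.symm, htx.symm, hxtx.symm, hxtt.symm]
  have : Nontrivial (Subgroup.closure {x, t}) :=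
    ⟨⟨x, Subgroup.subset_closure (.inl rfl)⟩, 1, fun h => hx1 (congrArg Subtype.val h)⟩
  refine ⟨hcard, (Monoid.exponent_eq_prime_iff Nat.prime_two).2 ?_⟩
  rintro ⟨z, hz⟩ hz1
  rw [← SetLike.mem_coe, hcoe] at hz
  rw [Subgroup.orderOf_mk]
  rcases hz with rfl | rfl | rfl | rfl
  exacts [absurd rfl hz1, hx, ht2, hxt2]

lemma closure_pair_eq_closure_pair_iff {t' : G} (hx : orderOf x = 2)
    (ht : t ∈ commutingInvolutions x) (ht' : t' ∈ commutingInvolutions x) :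
    Subgroup.closure {x, t} = Subgroup.closure {x, t'} ↔ t' = t ∨ t' = x * t := by
  have hcoe := coe_closure_pair_of_mem_commutingInvolutions hx ht
  constructor
  · intro h
    have hmem : t' ∈ (Subgroup.closure {x, t} : Set G) := by
      rw [h]
      exact Subgroup.subset_closure (.inr rfl)
    rw [hcoe] at hmem
    rcases hmem with h1 | hx' | htt' | hxt'
    · exact absurd h1 (orderOf_eq_two_iff_mul_self.1 ht'.2.1).2
    · exact absurd hx' ht'.2.2
    · exact .inl htt'
    · exact .inr hxt'
  · rintro (rfl | rfl)
    · rfl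
    · rw [← SetLike.coe_set_eq, hcoe, coe_closure_pair_of_mem_commutingInvolutions hx ht',
        ← mul_assoc, (orderOf_eq_two_iff_mul_self.1 hx).1, one_mul, Set.pair_comm (x * t)]

lemma encard_eq_two_mul_encard_image {α β : Type*} {S : Set α} {f : α → β} {s : α → α}
    (hs : Set.MapsTo s S S) (hne : ∀ a ∈ S, s a ≠ a)
    (hf : ∀ a ∈ S, ∀ b ∈ S, f a = f b ↔ b = a ∨ b = s a) :
    S.encard = 2 * (f '' S).encard := by
  obtain ⟨T, hTS, hT⟩ := Set.exists_subset_bijOn S f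
  have hfs {a : α} (ha : a ∈ S) : f (s a) = f a := ((hf a ha _ (hs ha)).2 (.inr rfl)).symm
  have hs_inj : Set.InjOn s T := fun a ha b hb hab =>
    hT.injOn ha hb (by rw [← hfs (hTS ha), hab, hfs (hTS hb)])
  have hdisj : Disjoint T (s '' T) := by
    rw [Set.disjoint_right]
    rintro _ ⟨a, ha, rfl⟩ hsa
    exact hne a (hTS ha) (hT.injOn hsa ha (hfs (hTS ha)))
  have hunion : S = T ∪ s '' T := by
    refine Set.Subset.antisymm (fun b hb => ?_)
      (Set.union_subset hTS (hs.mono_left hTS).image_subset)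
    obtain ⟨a, ha, hab⟩ := hT.surjOn ⟨b, hb, rfl⟩
    rcases (hf a (hTS ha) b hb).1 hab with rfl | rfl
    exacts [.inl ha, .inr ⟨a, ha, rfl⟩]
  rw [← hT.image_eq, hT.injOn.encard_image, hunion, Set.encard_union_eq hdisj,
    hs_inj.encard_image, two_mul]

lemma encard_commutingInvolutions_eq_two_mul (hx : orderOf x = 2) :
    (commutingInvolutions x).encard =
      2 * {V | ∃ t ∈ commutingInvolutions x, V = Subgroup.closure {x, t}}.encard := by
  have himage : {V | ∃ t ∈ commutingInvolutions x, V = Subgroup.closure {x, t}} =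
      (fun t => Subgroup.closure {x, t}) '' commutingInvolutions x :=
    Set.ext fun V => exists_congr fun t => and_congr_right' eq_comm
  rw [himage]
  exact encard_eq_two_mul_encard_image (fun _ ht => mul_mem_commutingInvolutions hx ht)
    (fun t _ => mul_ne_self_of_orderOf_eq_two hx t)
    (fun _ ht _ ht' => closure_pair_eq_closure_pair_iff hx ht ht')

end CommutingInvolutions

section ProjectiveGeneralLinear

variable {n F : Type*} [Fintype n] [DecidableEq n] [Field F]

lemma mk_eq_mk_iff_exists_eq_smul {g h : GL n F} :
    (g : GL n F ⧸ Subgroup.center (GL n F)) = h ↔ ∃ r : F, h.val = r • g.val := by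
  refine (ProjGenLinGroup.mk_eq_mk_iff (g₁ := g) (g₂ := h)).trans ⟨?_, ?_⟩
  · rintro ⟨u, rfl⟩
    exact ⟨u, by simp [← Matrix.smul_eq_mul_diagonal]⟩
  · rintro ⟨r, hr⟩
    rcases eq_or_ne r 0 with rfl | hr0
    · have : Subsingleton (Matrix n n F) :=
        subsingleton_of_zero_eq_one (isUnit_zero_iff.1 (by simpa [hr] using h.isUnit))
      exact ⟨1, Units.ext (Subsingleton.elim _ _)⟩
    · exact ⟨Units.mk0 r hr0, Units.ext (by simp [hr, ← Matrix.smul_eq_mul_diagonal])⟩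

variable {V : Type*} [AddCommGroup V] [Module F V]

/-- The map `ℙ(V) → PGL(n, F)` induced by a linear map from `V` to matrices that sends nonzero
vectors to invertible matrices. -/
noncomputable def projectivizationToPGL (φ : V →ₗ[F] Matrix n n F)
    (hφ : ∀ v ≠ 0, (φ v).det ≠ 0) (p : Projectivization F V) : GL n F ⧸ Subgroup.center (GL n F) :=
  GeneralLinearGroup.mkOfDetNeZero (φ p.rep) (hφ p.rep p.rep_nonzero)

variable [Nonempty n] {φ : V →ₗ[F] Matrix n n F} (hφ : ∀ v ≠ 0, (φ v).det ≠ 0)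
include hφ

lemma projectivizationToPGL_injective : Function.Injective (projectivizationToPGL φ hφ) := by
  have hφ_inj : Function.Injective φ := by
    rw [injective_iff_map_eq_zero]
    intro v hv
    by_contra hv0
    exact hφ v hv0 (by rw [hv, det_zero])
  intro p q hpq
  obtain ⟨r, hr : φ q.rep = r • φ p.rep⟩ := mk_eq_mk_iff_exists_eq_smul.1 hpq
  rw [← map_smul] at hr
  rw [← p.mk_rep, ← q.mk_rep, eq_comm, Projectivization.mk_eq_mk_iff']
  exact ⟨r, (hφ_inj hr).symm⟩

lemma mk_mem_range_projectivizationToPGL_iff {h : GL n F} :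
    (h : GL n F ⧸ Subgroup.center (GL n F)) ∈ Set.range (projectivizationToPGL φ hφ) ↔
      h.val ∈ LinearMap.range φ := by
  constructor
  · rintro ⟨p, hp⟩
    obtain ⟨r, hr⟩ := mk_eq_mk_iff_exists_eq_smul.1 hp
    exact ⟨r • p.rep, by rw [map_smul, hr]; rfl⟩
  · rintro ⟨v, hv⟩
    have hv0 : v ≠ 0 := by
      rintro rfl
      exact h.det_ne_zero (by rw [← hv, map_zero, det_zero])
    obtain ⟨a, ha⟩ := Projectivization.exists_smul_eq_mk_rep F v hv0
    refine ⟨.mk F v hv0, Eq.symm (mk_eq_mk_iff_exists_eq_smul.2 ⟨a, ?_⟩)⟩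
    rw [← hv, ← map_smul]
    exact congrArg φ ha.symm

end ProjectiveGeneralLinear

lemma enatCard_projectivization_fin_two (F : Type*) [Field F] :
    ENat.card (Projectivization F (Fin 2 → F)) = ENat.card F + 1 := by
  classical
  calc ENat.card (Projectivization F (Fin 2 → F))
      = ENat.card (F ⊕ Unit) := ENat.card_congr
        ((OnePoint.equivProjectivization F).symm.trans (Equiv.optionEquivSumPUnit F))
    _ = ENat.card F + 1 := by
      rw [ENat.card_sum, ENat.card_eq_coe_fintype_card (α := Unit), Fintype.card_unit, Nat.cast_one]

section TraceZero

variable {R : Type*} [CommRing R] {A B : Matrix (Fin 2) (Fin 2) R}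

lemma mul_self_eq_trace_smul_sub_det_smul_one (A : Matrix (Fin 2) (Fin 2) R) :
    A * A = A.trace • A - A.det • (1 : Matrix (Fin 2) (Fin 2) R) := by
  ext i j
  fin_cases i <;> fin_cases j <;>
    simp [mul_apply, Fin.sum_univ_two, trace_fin_two, det_fin_two] <;> ring

lemma mul_self_eq_neg_det_smul_one (hA : A.trace = 0) : A * A = -A.det • 1 := by
  rw [mul_self_eq_trace_smul_sub_det_smul_one, hA, zero_smul, zero_sub, neg_smul]

lemma mul_add_mul_eq_trace_smul_one (hA : A.trace = 0) (hB : B.trace = 0) :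
    A * B + B * A = (A * B).trace • (1 : Matrix (Fin 2) (Fin 2) R) := by
  rw [trace_fin_two, add_comm, add_eq_zero_iff_eq_neg] at hA hB
  ext i j
  fin_cases i <;> fin_cases j <;>
    simp [mul_apply, Fin.sum_univ_two, trace_fin_two, hA, hB] <;> ring

end TraceZero

section TraceOrthogonal

variable {F : Type*} [Field F] {A B : Matrix (Fin 2) (Fin 2) F}

/-- The trace-zero matrix with first row `v` that is orthogonal to the trace-zero matrix `A` for
the trace form `(A, B) ↦ tr (A * B)`. The division requires `A 0 1 ≠ 0`. -/
def traceOrthogonal (A : Matrix (Fin 2) (Fin 2) F) :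
    (Fin 2 → F) →ₗ[F] Matrix (Fin 2) (Fin 2) F where
  toFun v := !![v 0, v 1; -(2 * A 0 0 * v 0 + A 1 0 * v 1) / A 0 1, -v 0]
  map_add' v w := by
    ext i j
    fin_cases i <;> fin_cases j <;> simp <;> ring
  map_smul' r v := by
    ext i j
    fin_cases i <;> fin_cases j <;> simp
    ring

lemma traceOrthogonal_apply (A : Matrix (Fin 2) (Fin 2) F) (v : Fin 2 → F) :
    traceOrthogonal A v = !![v 0, v 1; -(2 * A 0 0 * v 0 + A 1 0 * v 1) / A 0 1, -v 0] :=
  rfl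

lemma mem_range_traceOrthogonal_iff (hA : A.trace = 0) (hA01 : A 0 1 ≠ 0) :
    B ∈ LinearMap.range (traceOrthogonal A) ↔ B.trace = 0 ∧ (A * B).trace = 0 := by
  rw [trace_fin_two, add_comm, add_eq_zero_iff_eq_neg] at hA
  constructor
  · rintro ⟨v, rfl⟩
    simp only [traceOrthogonal_apply, trace_fin_two, mul_apply, Fin.sum_univ_two, hA, of_apply,
      cons_val', cons_val_zero, cons_val_one, cons_val_fin_one]
    refine ⟨add_neg_cancel _, ?_⟩
    field_simp
    ring
  · rintro ⟨hB, hAB⟩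
    rw [trace_fin_two, add_comm, add_eq_zero_iff_eq_neg] at hB
    rw [trace_fin_two, mul_apply, mul_apply, Fin.sum_univ_two, Fin.sum_univ_two, hA, hB] at hAB
    have hB10 : -(2 * A 0 0 * B 0 0 + A 1 0 * B 0 1) / A 0 1 = B 1 0 := by
      rw [div_eq_iff hA01]
      linear_combination -hAB
    exact ⟨B 0, by rw [traceOrthogonal_apply, hB10, ← hB, ← eta_fin_two B]⟩

lemma sq_mul_det_traceOrthogonal (hA : A.trace = 0) (hA01 : A 0 1 ≠ 0) (v : Fin 2 → F) :
    A 0 1 ^ 2 * (traceOrthogonal A v).det =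
      -A.det * v 1 ^ 2 - (A 0 1 * v 0 - A 0 0 * v 1) ^ 2 := by
  rw [trace_fin_two, add_comm, add_eq_zero_iff_eq_neg] at hA
  rw [traceOrthogonal_apply, det_fin_two_of, det_fin_two, hA]
  field_simp
  ring

lemma apply_zero_one_ne_zero_of_not_isSquare_neg_det (hA : A.trace = 0)
    (hdet : ¬IsSquare (-A.det)) : A 0 1 ≠ 0 := by
  rw [trace_fin_two, add_comm, add_eq_zero_iff_eq_neg] at hA
  intro hA01
  exact hdet ⟨A 0 0, by rw [det_fin_two, hA, hA01]; ring⟩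

lemma det_traceOrthogonal_ne_zero (hA : A.trace = 0) (hdet : ¬IsSquare (-A.det)) {v : Fin 2 → F}
    (hv : v ≠ 0) : (traceOrthogonal A v).det ≠ 0 := by
  have hA01 := apply_zero_one_ne_zero_of_not_isSquare_neg_det hA hdet
  intro h
  have hnorm : -A.det * v 1 ^ 2 = (A 0 1 * v 0 - A 0 0 * v 1) ^ 2 := by
    rw [← sub_eq_zero, ← sq_mul_det_traceOrthogonal hA hA01, h, mul_zero]
  have hv1 : v 1 = 0 := by
    by_contra hv1
    refine hdet ⟨(A 0 1 * v 0 - A 0 0 * v 1) / v 1, ?_⟩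
    field_simp
    linear_combination hnorm
  have hv0 : v 0 = 0 := by simpa [hv1, hA01] using hnorm.symm
  exact hv (funext (Fin.forall_fin_two.2 ⟨hv0, hv1⟩))

end TraceOrthogonal

section ProjectiveGL2

variable {F : Type} [Field F] {g h : GL (Fin 2) F}

lemma orderOf_mk_eq_two_iff (h2 : (2 : F) ≠ 0) :
    orderOf (g : ProjectiveGL2 F) = 2 ↔ g.val.trace = 0 := by
  have hone {k : GL (Fin 2) F} : (k : ProjectiveGL2 F) = 1 ↔ ∃ r : F, k.val = r • 1 := by
    rw [eq_comm, ← QuotientGroup.mk_one, mk_eq_mk_iff_exists_eq_smul, Units.val_one]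
  rw [orderOf_eq_two_iff_mul_self, ← QuotientGroup.mk_mul, ne_eq, hone, hone, Units.val_mul]
  constructor
  · rintro ⟨⟨r, hr⟩, hg⟩
    by_contra htr
    refine hg ⟨g.val.trace⁻¹ * (r + g.val.det), ?_⟩
    rw [mul_self_eq_trace_smul_sub_det_smul_one, sub_eq_iff_eq_add, ← add_smul] at hr
    rw [mul_smul, ← hr, inv_smul_smul₀ htr]
  · intro htr
    refine ⟨⟨-g.val.det, mul_self_eq_neg_det_smul_one htr⟩, ?_⟩
    rintro ⟨r, hr⟩
    have hr0 : r = 0 := by simpa [hr, h2] using htr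
    exact g.det_ne_zero (by rw [hr, hr0, zero_smul, det_zero])

lemma commute_mk_of_trace_mul_eq_zero (hg : g.val.trace = 0) (hh : h.val.trace = 0)
    (hgh : (g.val * h.val).trace = 0) : Commute (g : ProjectiveGL2 F) h := by
  have hanti : h.val * g.val = (-1 : F) • (g.val * h.val) := by
    rw [neg_one_smul, ← add_eq_zero_iff_eq_neg', mul_add_mul_eq_trace_smul_one hg hh, hgh,
      zero_smul]
  exact mk_eq_mk_iff_exists_eq_smul.2 ⟨-1, hanti⟩

lemma mk_ne_mk_of_trace_mul_eq_zero (h2 : (2 : F) ≠ 0) (hg : g.val.trace = 0)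
    (hgh : (g.val * h.val).trace = 0) : (h : ProjectiveGL2 F) ≠ g := by
  intro heq
  obtain ⟨r, hr⟩ := mk_eq_mk_iff_exists_eq_smul.1 heq.symm
  have hr0 : r = 0 := by
    simpa [hr, mul_self_eq_neg_det_smul_one hg, h2, g.det_ne_zero] using hgh
  exact h.det_ne_zero (by rw [hr, hr0, zero_smul, det_zero])

lemma trace_mul_eq_zero_of_commute_mk (h2 : (2 : F) ≠ 0) (hg : g.val.trace = 0)
    (hh : h.val.trace = 0) (hcomm : Commute (g : ProjectiveGL2 F) h)
    (hne : (h : ProjectiveGL2 F) ≠ g) : (g.val * h.val).trace = 0 := by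
  by_contra htr
  obtain ⟨r, hr : h.val * g.val = r • (g.val * h.val)⟩ := mk_eq_mk_iff_exists_eq_smul.1 hcomm.eq
  have hr1 : r = 1 := by
    have htrace := congrArg trace hr
    rw [trace_mul_comm, trace_smul, smul_eq_mul] at htrace
    exact (mul_eq_right₀ htr).1 htrace.symm
  have hgh : (2 : F) • (g.val * h.val) = (g.val * h.val).trace • 1 := by
    rw [← mul_add_mul_eq_trace_smul_one hg hh, hr, hr1, one_smul, two_smul]
  have hprop : (2 * -g.val.det) • h.val = (g.val * h.val).trace • g.val := by
    calc (2 * -g.val.det) • h.val = g.val * ((2 : F) • (g.val * h.val)) := by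
          rw [Matrix.mul_smul, ← Matrix.mul_assoc, mul_self_eq_neg_det_smul_one hg, Matrix.smul_mul,
            Matrix.one_mul, mul_smul]
      _ = (g.val * h.val).trace • g.val := by rw [hgh, Matrix.mul_smul, Matrix.mul_one]
  refine hne (Eq.symm (mk_eq_mk_iff_exists_eq_smul.2
    ⟨(2 * -g.val.det)⁻¹ * (g.val * h.val).trace, ?_⟩))
  rw [mul_smul, ← hprop, inv_smul_smul₀ (mul_ne_zero h2 (neg_ne_zero.2 g.det_ne_zero))]

lemma mk_mem_commutingInvolutions_mk_iff (h2 : (2 : F) ≠ 0) (hg : g.val.trace = 0) :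
    (h : ProjectiveGL2 F) ∈ commutingInvolutions (g : ProjectiveGL2 F) ↔
      h.val.trace = 0 ∧ (g.val * h.val).trace = 0 := by
  rw [mem_commutingInvolutions_iff, orderOf_mk_eq_two_iff h2]
  constructor
  · rintro ⟨hcomm, hh, hne⟩
    exact ⟨hh, trace_mul_eq_zero_of_commute_mk h2 hg hh hcomm hne⟩
  · rintro ⟨hh, hgh⟩
    exact ⟨commute_mk_of_trace_mul_eq_zero hg hh hgh, hh, mk_ne_mk_of_trace_mul_eq_zero h2 hg hgh⟩

lemma encard_commutingInvolutions_mk (h2 : (2 : F) ≠ 0) (hg : g.val.trace = 0)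
    (hdet : ¬IsSquare (-g.val.det)) :
    (commutingInvolutions (g : ProjectiveGL2 F)).encard = ENat.card F + 1 := by
  have hg01 := apply_zero_one_ne_zero_of_not_isSquare_neg_det hg hdet
  have hφ : ∀ v ≠ 0, (traceOrthogonal g.val v).det ≠ 0 :=
    fun _ => det_traceOrthogonal_ne_zero hg hdet
  have hrange : commutingInvolutions (g : ProjectiveGL2 F) =
      Set.range (projectivizationToPGL (traceOrthogonal g.val) hφ) := by
    ext y
    induction y using QuotientGroup.induction_on with
    | H h =>
      rw [mk_mem_commutingInvolutions_mk_iff h2 hg, mk_mem_range_projectivizationToPGL_iff,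
        mem_range_traceOrthogonal_iff hg hg01]
  rw [hrange, ← Set.image_univ, (projectivizationToPGL_injective hφ).encard_image, Set.encard_univ,
    enatCard_projectivization_fin_two]

lemma mk_mem_socleSL2_of_isSquare_det (hg : IsSquare g.val.det) :
    (g : ProjectiveGL2 F) ∈ socleSL2 F := by
  obtain ⟨s, hs⟩ := hg
  have hs0 : s ≠ 0 := by
    rintro rfl
    exact g.det_ne_zero (by rw [hs, mul_zero])
  have hdet : (s⁻¹ • g.val).det = 1 := by
    rw [det_smul, hs, Fintype.card_fin]
    field_simp
  refine ⟨⟨s⁻¹ • g.val, hdet⟩, mk_eq_mk_iff_exists_eq_smul.2 ⟨s, ?_⟩⟩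
  exact (smul_inv_smul₀ hs0 g.val).symm

lemma encard_commutingInvolutions_of_notMem_socleSL2 (h2 : (2 : F) ≠ 0)
    (hneg : IsSquare (-1 : F)) {x : ProjectiveGL2 F} (hx : orderOf x = 2) (hxS : x ∉ socleSL2 F) :
    (commutingInvolutions x).encard = ENat.card F + 1 := by
  induction x using QuotientGroup.induction_on with
  | H g =>
    refine encard_commutingInvolutions_mk h2 ((orderOf_mk_eq_two_iff h2).1 hx) fun hdet => ?_
    exact hxS (mk_mem_socleSL2_of_isSquare_det (by simpa using hneg.mul hdet))

end ProjectiveGL2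

lemma pow_two_pow_mod_four_eq_one {p n : ℕ} (hodd : Odd p) (hn : 1 ≤ n) :
    p ^ 2 ^ n % 4 = 1 := by
  obtain ⟨m, rfl⟩ := Nat.exists_eq_add_of_le' hn
  obtain ⟨k, hk⟩ : Odd (p ^ 2 ^ m) := hodd.pow
  rw [pow_succ, pow_mul, hk]
  ring_nf
  omega

lemma two_ne_zero_of_odd_card {F : Type*} [Field F] [Fintype F] (hF : Odd (Fintype.card F)) :
    (2 : F) ≠ 0 :=
  Ring.two_ne_zero fun hchar => by
    have := FiniteField.even_card_iff_char_two.1 hchar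
    rw [Nat.odd_iff] at hF
    omega

theorem involutions_in_centralizer_outer_involution_general {F : Type} [Field F]
    (h2 : (2 : F) ≠ 0) (hneg : IsSquare (-1 : F)) {x : ProjectiveGL2 F} (hx : orderOf x = 2)
    (hxS : x ∉ socleSL2 F) :
    (∀ c ∈ Subgroup.centralizer ({x} : Set (ProjectiveGL2 F)), c * x = x * c) ∧
    {y : ProjectiveGL2 F |
        y ∈ Subgroup.centralizer ({x} : Set (ProjectiveGL2 F)) ∧ orderOf y = 2 ∧ y ≠ x}.encard
      = ENat.card F + 1 ∧
    (∀ t, t ∈ Subgroup.centralizer ({x} : Set (ProjectiveGL2 F)) → orderOf t = 2 → t ≠ x →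
      x * t ∈ Subgroup.centralizer ({x} : Set (ProjectiveGL2 F)) ∧ orderOf (x * t) = 2 ∧
        x * t ≠ x ∧ x * t ≠ t ∧ IsKleinFour ↥(Subgroup.closure {x, t})) ∧
    (∀ t t', t ∈ Subgroup.centralizer ({x} : Set (ProjectiveGL2 F)) → orderOf t = 2 → t ≠ x →
      t' ∈ Subgroup.centralizer ({x} : Set (ProjectiveGL2 F)) → orderOf t' = 2 → t' ≠ x →
      (Subgroup.closure {x, t} = Subgroup.closure {x, t'} ↔ t' = t ∨ t' = x * t)) ∧
    2 * {V : Subgroup (ProjectiveGL2 F) |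
        ∃ t, t ∈ Subgroup.centralizer ({x} : Set (ProjectiveGL2 F)) ∧ orderOf t = 2 ∧
          t ≠ x ∧ V = Subgroup.closure {x, t}}.encard
      = ENat.card F + 1 := by
  have hcard := encard_commutingInvolutions_of_notMem_socleSL2 h2 hneg hx hxS
  refine ⟨fun c => Subgroup.mem_centralizer_singleton_iff.1, hcard, fun t ht ht2 htx => ?_,
    fun t t' ht ht2 htx ht' ht2' htx' =>
      closure_pair_eq_closure_pair_iff hx ⟨ht, ht2, htx⟩ ⟨ht', ht2', htx'⟩, ?_⟩
  · obtain ⟨hxt, hxt2, hxtx⟩ := mul_mem_commutingInvolutions hx ⟨ht, ht2, htx⟩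
    exact ⟨hxt, hxt2, hxtx, mul_ne_self_of_orderOf_eq_two hx t,
      isKleinFour_closure_pair hx ⟨ht, ht2, htx⟩⟩
  · rw [encard_commutingInvolutions_eq_two_mul hx] at hcard
    simpa only [commutingInvolutions, Set.mem_ofPred_eq, and_assoc] using hcard

/-- Structure of the involutions in the centralizer `C` of an outer involution `x` of
`PGL₂(q)`: `x` is central in `C`; `C` contains exactly `q+1` involutions other than
`x`; these pair up as `{t, x*t}`, each pair generating with `x` a Klein four-subgroup;
distinct pairs give distinct Klein four-subgroups, so there are `(q+1)/2` of them. -/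
theorem involutions_in_centralizer_outer_involution (p n : ℕ) (hp : Nat.Prime p) (hodd : Odd p) (hn : 1 ≤ n)
    (F : Type) [Field F] [Fintype F] (hF : Fintype.card F = p ^ 2 ^ n)
    (x : ProjectiveGL2 F) (hx : orderOf x = 2) (hxS : x ∉ socleSL2 F) :
    (∀ c ∈ Subgroup.centralizer ({x} : Set (ProjectiveGL2 F)), c * x = x * c) ∧
    {y : ProjectiveGL2 F |
        y ∈ Subgroup.centralizer ({x} : Set (ProjectiveGL2 F)) ∧ orderOf y = 2 ∧ y ≠ x}.ncard
      = p ^ 2 ^ n + 1 ∧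
    (∀ t, t ∈ Subgroup.centralizer ({x} : Set (ProjectiveGL2 F)) → orderOf t = 2 → t ≠ x →
      x * t ∈ Subgroup.centralizer ({x} : Set (ProjectiveGL2 F)) ∧ orderOf (x * t) = 2 ∧
        x * t ≠ x ∧ x * t ≠ t ∧ IsKleinFour ↥(Subgroup.closure {x, t})) ∧
    (∀ t t', t ∈ Subgroup.centralizer ({x} : Set (ProjectiveGL2 F)) → orderOf t = 2 → t ≠ x →
      t' ∈ Subgroup.centralizer ({x} : Set (ProjectiveGL2 F)) → orderOf t' = 2 → t' ≠ x →
      (Subgroup.closure {x, t} = Subgroup.closure {x, t'} ↔ t' = t ∨ t' = x * t)) ∧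
    {V : Subgroup (ProjectiveGL2 F) |
        ∃ t, t ∈ Subgroup.centralizer ({x} : Set (ProjectiveGL2 F)) ∧ orderOf t = 2 ∧
          t ≠ x ∧ V = Subgroup.closure {x, t}}.ncard
      = (p ^ 2 ^ n + 1) / 2 := by
  have hmod : Fintype.card F % 4 = 1 := hF ▸ pow_two_pow_mod_four_eq_one hodd hn
  obtain ⟨hcentral, hcard, hpair, hclosure, hfour⟩ :=
    involutions_in_centralizer_outer_involution_general (two_ne_zero_of_odd_card (hF ▸ hodd.pow))
      (FiniteField.isSquare_neg_one_iff.2 (by omega)) hx hxS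
  rw [ENat.card_eq_coe_fintype_card, hF] at hcard hfour
  have hdouble := congrArg ENat.toNat hfour
  rw [ENat.toNat_mul] at hdouble
  exact ⟨hcentral, congrArg ENat.toNat hcard, hpair, hclosure,
    (Nat.div_eq_of_eq_mul_right two_pos hdouble.symm).symm⟩
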